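/- Let M₂,…,M_h be symmetric m×m matrices over ℚ, and suppose the matrix pencil M(y) = Σ_{i=2}^h y_i M_i has rank exactly 1 over the rational function field ℚ(y₂,…,y_h). Then there exist a rational linear form l(y₂,…,y_h) and a nonzero vector v ∈ ℚ^m such that M(y) = l(y₂,…,y_h)·v·vᵀ identically; equivalently, writing F_i for the quadratic form with matrix M_i, there is a rational linear form m(x) = v·x with Σ_{i=2}^h y_i F_i(x) = l(y₂,…,y_h)·m(x)² identically in x and y. -/

import Mathlib

open Matrix MvPolynomial

/-!
The `2 × 2` minors of the pencil vanish as polynomials, hence at every specialisation, so the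
span `W` of the `Mᵢ` consists of symmetric matrices `α · u uᵀ`. The minor of `α · u uᵀ + β · w wᵀ`
on rows and columns `a, c` is `α β (u_a w_c - u_c w_a)²`; closure of `W` under addition thus forces
all the vectors occurring in `W` to be parallel, and `W` is the line spanned by a single `v vᵀ`.
-/

/-- All `2 × 2` minors of `A` vanish. This is the condition "rank at most one" in a form that can
be transported along ring homomorphisms. -/
def TwoMinorsVanish {m n R : Type*} [Mul R] (A : Matrix m n R) : Prop :=
  ∀ a c b d, A a b * A c d = A a d * A c b

namespace TwoMinorsVanish

variable {m n R S K : Type*}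

lemma of_rank_le_one [CommRing R] [IsDomain R] [Fintype n] {A : Matrix m n R}
    (hA : A.rank ≤ 1) : TwoMinorsVanish A := by
  intro a c b d
  have hdet : (A.submatrix ![a, c] ![b, d]).det = 0 := by
    by_contra hdet
    have hfull : (A.submatrix ![a, c] ![b, d]).rank = 2 := rank_of_det_ne_zero hdet
    have hle := rank_submatrix_le A ![a, c] ![b, d]
    lia
  exact sub_eq_zero.mp ((det_fin_two _).symm.trans hdet)

lemma map [Semiring R] [Semiring S] {A : Matrix m n R} (hA : TwoMinorsVanish A) (f : R →+* S) :
    TwoMinorsVanish (A.map f) := fun a c b d ↦ by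
  simp only [map_apply, ← map_mul, hA a c b d]

lemma of_map [Semiring R] [Semiring S] {A : Matrix m n R} {f : R →+* S}
    (hf : Function.Injective f) (hA : TwoMinorsVanish (A.map f)) : TwoMinorsVanish A :=
  fun a c b d ↦ hf <| by simpa only [map_apply, ← map_mul] using hA a c b d

lemma exists_diag_ne_zero [MulZeroClass R] [NoZeroDivisors R] {A : Matrix n n R}
    (hA : TwoMinorsVanish A) (hsymm : A.IsSymm) (hne : A ≠ 0) : ∃ a, A a a ≠ 0 := by
  by_contra! hdiag
  refine hne (Matrix.ext fun a b ↦ mul_self_eq_zero.mp ?_)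
  calc A a b * A a b = A a b * A b a := by rw [hsymm.apply]
    _ = A a a * A b b := hA a b b a
    _ = 0 := by rw [hdiag a, zero_mul]

lemma exists_eq_smul_vecMulVec_self [Field K] {A : Matrix n n K} (hA : TwoMinorsVanish A)
    (hsymm : A.IsSymm) : ∃ (α : K) (u : n → K), A = α • vecMulVec u u := by
  obtain rfl | hne := eq_or_ne A 0
  · exact ⟨0, 0, by simp only [zero_smul]⟩
  obtain ⟨a, ha⟩ := hA.exists_diag_ne_zero hsymm hne
  refine ⟨(A a a)⁻¹, A a, Matrix.ext fun c d ↦ ?_⟩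
  rw [Matrix.smul_apply, vecMulVec_apply, smul_eq_mul, eq_inv_mul_iff_mul_eq₀ ha, hA a c a d,
    hsymm.apply a c, mul_comm]

lemma mul_eq_mul_of_smul_add_smul [CommRing R] [NoZeroDivisors R] {α β : R} {u w : n → R}
    (hα : α ≠ 0) (hβ : β ≠ 0) (h : TwoMinorsVanish (α • vecMulVec u u + β • vecMulVec w w))
    (a c : n) :
    u a * w c = u c * w a := by
  have hminor := h a c a c
  simp only [Matrix.add_apply, Matrix.smul_apply, vecMulVec_apply, smul_eq_mul] at hminor
  have hsq : α * β * (u a * w c - u c * w a) ^ 2 = 0 := by linear_combination hminor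
  simpa [hα, hβ, sub_eq_zero] using hsq

lemma smul_vecMulVec_self_mem_span [Field K] {α β : K} {u w : n → K} (hα : α ≠ 0) (hu : u ≠ 0)
    (h : TwoMinorsVanish (α • vecMulVec u u + β • vecMulVec w w)) :
    β • vecMulVec w w ∈ K ∙ vecMulVec u u := by
  obtain rfl | hβ := eq_or_ne β 0
  · simp only [zero_smul, zero_mem]
  obtain ⟨a, ha⟩ := Function.ne_iff.mp hu
  have hw : w = (w a / u a) • u := by
    ext c
    rw [Pi.smul_apply, smul_eq_mul, div_mul_eq_mul_div, eq_div_iff ha]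
    linear_combination h.mul_eq_mul_of_smul_add_smul hα hβ a c
  rw [hw, smul_vecMulVec, vecMulVec_smul]
  exact Submodule.smul_mem _ _ <| Submodule.smul_mem _ _ <| Submodule.smul_mem _ _ <|
    Submodule.mem_span_singleton_self _

end TwoMinorsVanish

theorem exists_eq_span_vecMulVec_self {K n : Type*} [Field K] {W : Submodule K (Matrix n n K)}
    (hW : W ≠ ⊥) (hsymm : ∀ A ∈ W, A.IsSymm) (hminors : ∀ A ∈ W, TwoMinorsVanish A) :
    ∃ v : n → K, v ≠ 0 ∧ W = K ∙ vecMulVec v v := by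
  obtain ⟨A, hA, hne⟩ := W.ne_bot_iff.mp hW
  obtain ⟨α, v, rfl⟩ := (hminors A hA).exists_eq_smul_vecMulVec_self (hsymm A hA)
  obtain ⟨hα, hvv⟩ := smul_ne_zero_iff.mp hne
  have hv : v ≠ 0 := fun h ↦ hvv (by rw [h, vecMulVec_zero])
  refine ⟨v, hv, le_antisymm (fun B hB ↦ ?_) ?_⟩
  · obtain ⟨β, w, rfl⟩ := (hminors B hB).exists_eq_smul_vecMulVec_self (hsymm B hB)
    exact (hminors _ (W.add_mem hA hB)).smul_vecMulVec_self_mem_span hα hv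
  · rw [Submodule.span_singleton_le_iff_mem]
    exact (W.smul_mem_iff hα).mp hA

lemma isSymm_of_mem_span {n R : Type*} [Semiring R] {s : Set (Matrix n n R)}
    (hs : ∀ A ∈ s, A.IsSymm) {A : Matrix n n R} (hA : A ∈ Submodule.span R s) : A.IsSymm := by
  induction hA using Submodule.span_induction with
  | mem A hA => exact hs A hA
  | zero => exact isSymm_zero
  | add A B _ _ hA hB => exact hA.add hB
  | smul c A _ hA => exact hA.smul c

section Pencil

variable {ι m n R K L : Type*} [Fintype ι]

/-- The linear pencil `∑ i, Xᵢ Mᵢ`, as a matrix of linear forms in the indeterminates `Xᵢ`. Its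
generic rank is its rank after base change to the fraction field of the polynomial ring. -/
noncomputable def linearPencil [CommSemiring R] (M : ι → Matrix m n R) :
    Matrix m n (MvPolynomial ι R) :=
  of fun a b ↦ ∑ i, X i * C (M i a b)

lemma linearPencil_zero [CommSemiring R] : linearPencil (0 : ι → Matrix m n R) = 0 := by
  ext1 a b
  simp [linearPencil]

lemma linearPencil_map_eval [CommSemiring R] (M : ι → Matrix m n R) (y : ι → R) :
    (linearPencil M).map (eval y) = ∑ i, y i • M i := by
  ext a b
  simp [linearPencil, Matrix.sum_apply]

lemma twoMinorsVanish_of_mem_span_range [CommRing R] [CommRing L] [IsDomain L] [Fintype n]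
    {M : ι → Matrix m n R} {f : MvPolynomial ι R →+* L} (hf : Function.Injective f)
    (hrank : ((linearPencil M).map f).rank ≤ 1) {A : Matrix m n R}
    (hA : A ∈ Submodule.span R (Set.range M)) : TwoMinorsVanish A := by
  obtain ⟨y, rfl⟩ := (Submodule.mem_span_range_iff_exists_fun R).mp hA
  rw [← linearPencil_map_eval]
  exact ((TwoMinorsVanish.of_rank_le_one hrank).of_map hf).map (eval y)

lemma sum_smul_eq_of_forall_eq_smul {E : Type*} [CommSemiring R] [AddCommMonoid E] [Module R E]
    {M : ι → E} {l : ι → R} {e : E} (hM : ∀ i, M i = l i • e) (y : ι → R) :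
    ∑ i, y i • M i = (∑ i, l i * y i) • e := by
  simp only [hM, Finset.sum_smul, smul_smul, mul_comm]

lemma dotProduct_smul_vecMulVec_self_mulVec [CommSemiring R] [Fintype n] (c : R) (v x : n → R) :
    x ⬝ᵥ (c • vecMulVec v v) *ᵥ x = c * (v ⬝ᵥ x) ^ 2 := by
  rw [smul_mulVec, vecMulVec_mulVec, op_smul_eq_smul, dotProduct_smul, dotProduct_smul,
    dotProduct_comm x v, smul_eq_mul, smul_eq_mul, sq]

theorem stmt16_general [Field K] [Field L] [Algebra (MvPolynomial ι K) L]
    [IsFractionRing (MvPolynomial ι K) L] [Fintype n] {M : ι → Matrix n n K}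
    (hsymm : ∀ i, (M i).IsSymm)
    (hrank : ((linearPencil M).map (algebraMap (MvPolynomial ι K) L)).rank = 1) :
    ∃ (l : ι → K) (v : n → K), v ≠ 0 ∧ ∀ i, M i = l i • vecMulVec v v := by
  have hmem_span (i : ι) : M i ∈ Submodule.span K (Set.range M) :=
    Submodule.subset_span (Set.mem_range_self i)
  have hspan : Submodule.span K (Set.range M) ≠ ⊥ := by
    intro hbot
    obtain rfl : M = 0 := funext fun i ↦ (Submodule.mem_bot K).mp (hbot ▸ hmem_span i)
    simp [linearPencil_zero] at hrank
  obtain ⟨v, hv, hW⟩ := exists_eq_span_vecMulVec_self hspan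
    (fun _ ↦ isSymm_of_mem_span (Set.forall_mem_range.mpr hsymm))
    (fun _ ↦ twoMinorsVanish_of_mem_span_range (IsFractionRing.injective _ L) hrank.le)
  have hmem (i : ι) : ∃ c : K, c • vecMulVec v v = M i :=
    Submodule.mem_span_singleton.mp (hW ▸ hmem_span i)
  choose l hl using hmem
  exact ⟨l, v, hv, fun i ↦ (hl i).symm⟩

end Pencil

/-- A pencil of symmetric rational matrices of generic rank one is
`l(y) · v vᵀ` for a rational linear form `l` and a nonzero rational vector `v`. -/
theorem stmt16 (m k : ℕ)
    (M : Fin k → Matrix (Fin m) (Fin m) ℚ) (hsym : ∀ i, (M i).IsSymm)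
    (hrank : Matrix.rank
      (Matrix.of fun a b =>
        algebraMap (MvPolynomial (Fin k) ℚ) (FractionRing (MvPolynomial (Fin k) ℚ))
          (∑ i, X i * C (M i a b)) :
        Matrix (Fin m) (Fin m) (FractionRing (MvPolynomial (Fin k) ℚ))) = 1) :
    ∃ (l : Fin k → ℚ) (v : Fin m → ℚ), v ≠ 0 ∧
      (∀ y : Fin k → ℚ, (∑ i, y i • M i) = (∑ i, l i * y i) • vecMulVec v v) ∧
      (∀ (y : Fin k → ℚ) (x : Fin m → ℚ),
        x ⬝ᵥ (∑ i, y i • M i).mulVec x = (∑ i, l i * y i) * (v ⬝ᵥ x) ^ 2) := by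
  obtain ⟨l, v, hv, hM⟩ := stmt16_general hsym hrank
  exact ⟨l, v, hv, sum_smul_eq_of_forall_eq_smul hM, fun y x ↦ by
    rw [sum_smul_eq_of_forall_eq_smul hM, dotProduct_smul_vecMulVec_self_mulVec]⟩
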